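/- For every sequence (π_k) of causal couplings in Π_c(μ, *) with E_{π_k}[c_N(X, Y)] > 0 for all k and E_{π_k}[c_N(X, Y)] → 0 as k → ∞, one has limsup_{k→∞} E_{π_k}[f(Y) − f(X)] / E_{π_k}[c_N(X, Y)]^{1/p} ≤ ‖ᵒ𝔻f‖_{L^q(μ)} = ( Σ_{n=1}^N E_μ[ |E_μ[𝔻_n f(X) | F_n]|_*^q ] )^{1/q}. -/

import Mathlib

open MeasureTheory Filter Set
open scoped ENNReal

noncomputable section

/-- Discrete path space `X = (ℝ^d)^N`. -/
abbrev PathD (N d : ℕ) : Type := Fin N → Fin d → ℝ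

/-- The `ℓ_e` norm on `ℝ^d`. -/
def lpnorm {d : ℕ} (e : ℝ) (v : Fin d → ℝ) : ℝ := (∑ i, |v i| ^ e) ^ (1 / e)

/-- Coordinate `x_n` of a path, with the convention `x_0 = 0` (and `x_n = 0` for `n > N`). -/
def coord {N d : ℕ} (x : PathD N d) (n : ℕ) : Fin d → ℝ :=
  if h : 1 ≤ n ∧ n ≤ N then x ⟨n - 1, by omega⟩ else 0

/-- The cost `c_N(x,y) = Σ_{n=1}^N |Δx_n − Δy_n|^p` (with `|·|` the `ℓ_p` norm). -/
def cN {N d : ℕ} (p : ℝ) (x y : PathD N d) : ℝ :=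
  ∑ n ∈ Finset.Icc 1 N,
    lpnorm p ((coord x n - coord x (n - 1)) - (coord y n - coord y (n - 1))) ^ p

/-- The σ-algebra `F_n = σ(x_1, …, x_n)` on the discrete path space. -/
def Fn (N d n : ℕ) : MeasurableSpace (PathD N d) :=
  MeasurableSpace.comap (fun x (i : Fin N) => if (i : ℕ) + 1 ≤ n then x i else 0) inferInstance

/-- Conditional independence of `m₁` and `m₂` given `m'` under `π`, expressed through
conditional expectations of indicators. -/
def CondIndepOn {Ω : Type*} [MeasurableSpace Ω] (π : Measure Ω)
    (m' m₁ m₂ : MeasurableSpace Ω) : Prop :=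
  ∀ A B : Set Ω, MeasurableSet[m₁] A → MeasurableSet[m₂] B →
    (π[(A ∩ B).indicator (fun _ => (1 : ℝ)) | m']) =ᵐ[π]
      (π[A.indicator (fun _ => (1 : ℝ)) | m']) * (π[B.indicator (fun _ => (1 : ℝ)) | m'])

/-- `π` is a coupling with first marginal `μ` which is causal to its second marginal:
for every `n`, `σ(Y_1,…,Y_n)` is conditionally independent of `σ(X_1,…,X_N)` given `F_n`. -/
def IsCausalStar {N d : ℕ} (μ : Measure (PathD N d))
    (π : Measure (PathD N d × PathD N d)) : Prop :=
  π.map Prod.fst = μ ∧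
  ∀ n : ℕ, CondIndepOn π ((Fn N d n).comap Prod.fst)
    ((Fn N d n).comap Prod.snd) ((Fn N d N).comap Prod.fst)

/-- `π` is a causal coupling of `(μ, ν)`. -/
def IsCausalCoupling {N d : ℕ} (μ ν : Measure (PathD N d))
    (π : Measure (PathD N d × PathD N d)) : Prop :=
  π.map Prod.snd = ν ∧ IsCausalStar μ π

/-- `π` is a bicausal coupling of `(μ, ν)`: both `π` and its swap are causal. -/
def IsBicausalCoupling {N d : ℕ} (μ ν : Measure (PathD N d))
    (π : Measure (PathD N d × PathD N d)) : Prop :=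
  IsCausalCoupling μ ν π ∧
  (∀ n : ℕ, CondIndepOn π ((Fn N d n).comap Prod.snd)
    ((Fn N d n).comap Prod.fst) ((Fn N d N).comap Prod.snd))

/-- `μ` is a martingale measure on the discrete path space: every coordinate is integrable
and `E_μ[X_n | F_{n−1}] = X_{n−1}` a.s. (with `X_0 = 0`). -/
def IsMartingaleMeasure {N d : ℕ} (μ : Measure (PathD N d)) : Prop :=
  ∀ n : ℕ, 1 ≤ n → n ≤ N →
    Integrable (fun x => coord x n) μ ∧
    (μ[(fun x => coord x n) | Fn N d (n - 1)]) =ᵐ[μ] (fun x => coord x (n - 1))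


/-- The discrete pathwise Malliavin derivative `𝔻_n f = Σ_{k=n}^N ∂_k f`, where `∂_k f` is the
`ℝ^d`-valued partial gradient of `f` in the `k`-th coordinate block (`k = 1, …, N`). -/
def Dn {N d : ℕ} (f : PathD N d → ℝ) (n : ℕ) (x : PathD N d) : Fin d → ℝ :=
  fun j => ∑ k : Fin N, if n ≤ (k : ℕ) + 1 then
    fderiv ℝ f x (Pi.single k (Pi.single j 1)) else 0

/-- Standing assumptions on the penalty function `L : [0,∞) → [0,∞]`:
continuous, non-decreasing, `L(0) = 0` and `liminf_{u→∞} L(u)/u^p = +∞`. -/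
structure PenaltyAssumptions (p : ℝ) (L : ℝ → ℝ≥0∞) : Prop where
  cont : ContinuousOn L (Set.Ici 0)
  mono : MonotoneOn L (Set.Ici 0)
  zero : L 0 = 0
  growth : Tendsto (fun u : ℝ => L u / ENNReal.ofReal (u ^ p)) atTop (nhds ⊤)

/-- The convex conjugate `L*(v) = sup_{u ≥ 0} { u v − L(u) }`, valued in the extended reals. -/
def Lconj (L : ℝ → ℝ≥0∞) (v : ℝ) : EReal :=
  ⨆ u : {u : ℝ // 0 ≤ u}, ((u.1 * v : ℝ) : EReal) - ((L u.1 : ℝ≥0∞) : EReal)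

/-- The expected transport cost `E_π[c_N(X,Y)]` of a coupling. -/
def costD {N d : ℕ} (p : ℝ) (π : Measure (PathD N d × PathD N d)) : ℝ :=
  ∫ z, cN p z.1 z.2 ∂π

/-- The penalised causal DRO value
`V(δ) = sup_{π ∈ Π_c(μ,*), E_π[c_N] < ∞} { E_π[f(Y)] − δ L(E_π[c_N(X,Y)]^{1/p}/δ) }`,
valued in the extended reals. -/
def VD {N d : ℕ} (p : ℝ) (L : ℝ → ℝ≥0∞) (μ : Measure (PathD N d))
    (f : PathD N d → ℝ) (δ : ℝ) : EReal :=
  ⨆ π : {π : Measure (PathD N d × PathD N d) //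
      IsProbabilityMeasure π ∧ IsCausalStar μ π ∧
      Integrable (fun z => cN p z.1 z.2) π},
    ((∫ z, f z.2 ∂π.1 : ℝ) : EReal) -
      ((ENNReal.ofReal δ * L ((costD p π.1) ^ (1 / p) / δ) : ℝ≥0∞) : EReal)

/-- The `L^q(μ)`-norm `(Σ_{n=1}^N E_μ[|E_μ[𝔻_n f(X)|F_n]|_*^q])^{1/q}` of the optional
projection of the discrete pathwise Malliavin derivative. -/
def optionalNorm {N d : ℕ} (q : ℝ) (μ : Measure (PathD N d)) (f : PathD N d → ℝ) : ℝ :=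
  (∑ n ∈ Finset.Icc 1 N, ∫ x, lpnorm q ((μ[Dn f n | Fn N d n]) x) ^ q ∂μ) ^ (1 / q)

/-- The map `v(e) = (e_1|e_1|^{q−2}, …, e_d|e_d|^{q−2})` on `ℝ^d`. -/
def vmap {d : ℕ} (q : ℝ) (e : Fin d → ℝ) : Fin d → ℝ :=
  fun i => e i * |e i| ^ (q - 2)

/-- The inverse `Δ^{-1}` of the increment map: `(Δ^{-1} y)_n = Σ_{k=1}^n y_k`. -/
def DeltaInv {N d : ℕ} (y : PathD N d) : PathD N d :=
  fun i => ∑ k : Fin N, if (k : ℕ) ≤ (i : ℕ) then y k else 0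

/-- A process `h = (h_n)_{n=1}^N` is predictable if `h_n` is `F_{n−1}`-measurable. -/
def IsPredictable {N d : ℕ} (h : ℕ → PathD N d → Fin d → ℝ) : Prop :=
  ∀ n : ℕ, 1 ≤ n → n ≤ N → Measurable[Fn N d (n - 1)] (h n)

end

open MeasureTheory Filter

/-
Write `f(Y) - f(X)` as the first-order term `∇f(X)·(Y - X)` plus a Taylor remainder.

* Summation by parts turns the first-order term into `∑ n, 𝔻_n f(X) · (ΔY_n - ΔX_n)`. Under a
  causal coupling, `ΔX_n` is `F_n`-measurable and `ΔY_n` is independent of `X` given `F_n`, so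
  `𝔻_n f(X)` may be replaced by `E[𝔻_n f(X) | F_n]`, and Hölder's inequality bounds the expectation
  by `‖ᵒ𝔻f‖_{L^q(μ)} E[c_N]^{1/p}`.
* The remainder is `o(E[c_N]^{1/p})`. Where `|Y - X| ≤ t (1 + |X|)` it is at most `ω_t(X) |Y - X|`,
  with `ω_t` a relative modulus of continuity of the derivative which tends to zero in `L^q(μ)` as
  `t → 0`; elsewhere the growth condition bounds it by a multiple of `|Y - X|^p`.
-/

section ConditionalIndependence

variable {Ω : Type*} {m m' m₁ m₂ m₀ : MeasurableSpace Ω} {π : Measure Ω} {g v : Ω → ℝ}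

theorem integral_indicator_one_mul {A : Set Ω} (hA : MeasurableSet A) (u : Ω → ℝ) :
    ∫ ω, A.indicator (fun _ => (1 : ℝ)) ω * u ω ∂π = ∫ ω in A, u ω ∂π := by
  simp_rw [← integral_indicator hA, ← Set.indicator_mul_left, one_mul]

theorem integral_condExp_mul_of_stronglyMeasurable (hm : m ≤ m₀) [SigmaFinite (π.trim hm)]
    (hv : StronglyMeasurable[m] v) (hg : Integrable g π) (hgv : Integrable (g * v) π) :
    ∫ ω, (π[g | m]) ω * v ω ∂π = ∫ ω, g ω * v ω ∂π :=
  calc ∫ ω, (π[g | m]) ω * v ω ∂π = ∫ ω, (π[g * v | m]) ω ∂π :=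
        integral_congr_ae (condExp_mul_of_stronglyMeasurable_right hv hgv hg).symm
    _ = ∫ ω, g ω * v ω ∂π := integral_condExp hm

theorem integral_condExp_indicator_mul [IsFiniteMeasure π] (hm : m ≤ m₀)
    (hv : StronglyMeasurable[m] v) (hvi : Integrable v π) {A : Set Ω} (hA : MeasurableSet A) :
    ∫ ω, (π[A.indicator (fun _ => (1 : ℝ)) | m]) ω * v ω ∂π = ∫ ω in A, v ω ∂π := by
  have hAv : A.indicator (fun _ => (1 : ℝ)) * v = A.indicator v := by
    ext ω; simp [← Set.indicator_mul_left]
  rw [integral_condExp_mul_of_stronglyMeasurable hm hv ((integrable_const 1).indicator hA)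
    (hAv ▸ hvi.indicator hA), integral_indicator_one_mul hA]

variable [IsFiniteMeasure π]

theorem CondIndepOn.condExp_indicator_ae_eq (h : CondIndepOn π m' m₁ m₂) (h' : m' ≤ m₂)
    (h₁ : m₁ ≤ m₀) (h₂ : m₂ ≤ m₀) {A : Set Ω} (hA : MeasurableSet[m₁] A) :
    π[A.indicator (fun _ => (1 : ℝ)) | m'] =ᵐ[π] π[A.indicator (fun _ => (1 : ℝ)) | m₂] := by
  have hm' : m' ≤ m₀ := h'.trans h₂
  refine ae_eq_condExp_of_forall_setIntegral_eq h₂ ((integrable_const 1).indicator (h₁ A hA))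
    (fun _ _ _ => integrable_condExp.integrableOn) (fun B hB _ => ?_)
    (stronglyMeasurable_condExp.mono h').aestronglyMeasurable
  calc ∫ ω in B, (π[A.indicator (fun _ => (1 : ℝ)) | m']) ω ∂π
      = ∫ ω, (π[B.indicator (fun _ => (1 : ℝ)) | m']) ω *
          (π[A.indicator (fun _ => (1 : ℝ)) | m']) ω ∂π :=
        (integral_condExp_indicator_mul hm' stronglyMeasurable_condExp integrable_condExp
          (h₂ B hB)).symm
    _ = ∫ ω, (π[(A ∩ B).indicator (fun _ => (1 : ℝ)) | m']) ω ∂π := by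
        refine integral_congr_ae ?_
        filter_upwards [h A B hA hB] with ω hω
        rw [hω, Pi.mul_apply, mul_comm]
    _ = ∫ ω, (A ∩ B).indicator (fun _ => (1 : ℝ)) ω ∂π := integral_condExp hm'
    _ = ∫ ω in B, A.indicator (fun _ => (1 : ℝ)) ω ∂π := by
        rw [← integral_indicator (h₂ B hB), Set.indicator_indicator, Set.inter_comm]

theorem CondIndepOn.condExp_condExp_ae_eq (h : CondIndepOn π m' m₁ m₂) (h' : m' ≤ m₂)
    (h₁ : m₁ ≤ m₀) (h₂ : m₂ ≤ m₀) (hg : StronglyMeasurable[m₂] g) (hgi : Integrable g π) :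
    π[π[g | m'] | m₁] =ᵐ[π] π[g | m₁] := by
  have hm' : m' ≤ m₀ := h'.trans h₂
  refine ae_eq_condExp_of_forall_setIntegral_eq h₁ hgi
    (fun _ _ _ => integrable_condExp.integrableOn) (fun A hA _ => ?_)
    stronglyMeasurable_condExp.aestronglyMeasurable
  set P := π[A.indicator (fun _ => (1 : ℝ)) | m']
  have hP : ∀ᵐ ω ∂π, ‖P ω‖ ≤ 1 := ae_bdd_abs_condExp_of_ae_bdd_abs (R := 1) <|
    Eventually.of_forall fun ω => by by_cases hω : ω ∈ A <;> simp [hω]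
  have hgP : Integrable (g * P) π :=
    hgi.mul_bdd (c := 1) (stronglyMeasurable_condExp.mono hm').aestronglyMeasurable hP
  calc ∫ ω in A, (π[π[g | m'] | m₁]) ω ∂π
      = ∫ ω in A, (π[g | m']) ω ∂π := setIntegral_condExp h₁ integrable_condExp hA
    _ = ∫ ω, P ω * (π[g | m']) ω ∂π :=
        (integral_condExp_indicator_mul hm' stronglyMeasurable_condExp integrable_condExp
          (h₁ A hA)).symm
    _ = ∫ ω, g ω * P ω ∂π := by
        simp_rw [mul_comm (P _)]
        exact integral_condExp_mul_of_stronglyMeasurable hm' stronglyMeasurable_condExp hgi hgP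
    _ = ∫ ω, (π[A.indicator (fun _ => (1 : ℝ)) | m₂]) ω * g ω ∂π := by
        refine integral_congr_ae ?_
        filter_upwards [h.condExp_indicator_ae_eq h' h₁ h₂ hA] with ω hω
        rw [← hω, mul_comm]
    _ = ∫ ω in A, g ω ∂π := integral_condExp_indicator_mul h₂ hg hgi (h₁ A hA)

theorem CondIndepOn.integral_condExp_mul (h : CondIndepOn π m' m₁ m₂) (h' : m' ≤ m₂)
    (h₁ : m₁ ≤ m₀) (h₂ : m₂ ≤ m₀) (hg : StronglyMeasurable[m₂] g) (hgi : Integrable g π)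
    (hv : StronglyMeasurable[m₁] v) (hgv : Integrable (g * v) π)
    (hGv : Integrable (π[g | m'] * v) π) :
    ∫ ω, (π[g | m']) ω * v ω ∂π = ∫ ω, g ω * v ω ∂π :=
  calc ∫ ω, (π[g | m']) ω * v ω ∂π = ∫ ω, (π[π[g | m'] | m₁]) ω * v ω ∂π :=
        (integral_condExp_mul_of_stronglyMeasurable h₁ hv integrable_condExp hGv).symm
    _ = ∫ ω, (π[g | m₁]) ω * v ω ∂π := by
        refine integral_congr_ae ?_
        filter_upwards [h.condExp_condExp_ae_eq h' h₁ h₂ hg hgi] with ω hω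
        rw [hω]
    _ = ∫ ω, g ω * v ω ∂π := integral_condExp_mul_of_stronglyMeasurable h₁ hv hgi hgv

theorem condExp_map_comp_ae_eq {X : Type*} {n mX : MeasurableSpace X}
    (hn : n ≤ mX) {φ : Ω → X} (hφ : Measurable φ) {u : X → ℝ} (hu : Integrable u (π.map φ)) :
    ((π.map φ)[u | n]) ∘ φ =ᵐ[π] π[u ∘ φ | n.comap φ] := by
  refine ae_eq_condExp_of_forall_setIntegral_eq
    ((MeasurableSpace.comap_mono hn).trans hφ.comap_le) (hu.comp_measurable hφ)
    (fun _ _ _ => (integrable_condExp.comp_measurable hφ).integrableOn) ?_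
    (stronglyMeasurable_condExp.comp_measurable (comap_measurable φ)).aestronglyMeasurable
  rintro _ ⟨T, hT, rfl⟩ -
  simp only [Function.comp_apply]
  rw [← setIntegral_map (hn T hT) integrable_condExp.aestronglyMeasurable hφ.aemeasurable,
    ← setIntegral_map (hn T hT) hu.aestronglyMeasurable hφ.aemeasurable,
    setIntegral_condExp hn hu hT]

end ConditionalIndependence

section TaylorRemainder

open Metric Asymptotics Topology

section Modulus

variable {E F : Type*} [NormedAddCommGroup E] [NormedSpace ℝ E] [NormedAddCommGroup F]
  {g : E → F} {K s t : ℝ} {x y : E}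

/-- The modulus of continuity of `g` at `x` at the scale `t * (1 + ‖x‖)`, that is, the supremum of
`‖g y - g x‖` over the ball `‖y - x‖ ≤ t * (1 + ‖x‖)`, which is parametrised by the unit ball so
that the index set does not depend on `x`. -/
noncomputable def relModulus (g : E → F) (t : ℝ) (x : E) : ℝ :=
  sSup ((fun u : E => ‖g (x + (t * (1 + ‖x‖)) • u) - g x‖) '' closedBall 0 1)

theorem relModulus_nonneg (g : E → F) (t : ℝ) (x : E) : 0 ≤ relModulus g t x :=
  Real.sSup_nonneg (by rintro _ ⟨u, -, rfl⟩; exact norm_nonneg _)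

theorem relModulus_zero (g : E → F) (x : E) : relModulus g 0 x = 0 := by
  have h : (closedBall (0 : E) 1).Nonempty := nonempty_closedBall.2 zero_le_one
  simp [relModulus, h.image_const]

theorem continuous_uncurry_relModulus [ProperSpace E] (hg : Continuous g) :
    Continuous (Function.uncurry (relModulus g)) :=
  (isCompact_closedBall (0 : E) 1).continuous_sSup
    (f := fun (z : ℝ × E) u => ‖g (z.2 + (z.1 * (1 + ‖z.2‖)) • u) - g z.2‖) (by fun_prop)

theorem norm_sub_le_relModulus [ProperSpace E] (hg : Continuous g) (ht : 0 < t)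
    (hxy : ‖y - x‖ ≤ t * (1 + ‖x‖)) : ‖g y - g x‖ ≤ relModulus g t x := by
  have hr : 0 < t * (1 + ‖x‖) := by positivity
  refine le_csSup ((isCompact_closedBall (0 : E) 1).bddAbove_image (by fun_prop))
    ⟨(t * (1 + ‖x‖))⁻¹ • (y - x), ?_, ?_⟩
  · rw [mem_closedBall_zero_iff, norm_smul, norm_inv, Real.norm_of_nonneg hr.le]
    exact inv_mul_le_one_of_le₀ hxy hr.le
  · simp only [smul_inv_smul₀ hr.ne', add_sub_cancel]

theorem relModulus_le (hs : 0 ≤ s) (hK : 0 ≤ K) (hg : ∀ x, ‖g x‖ ≤ K * (1 + ‖x‖) ^ s)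
    (ht₀ : 0 ≤ t) (ht₁ : t ≤ 1) (x : E) :
    relModulus g t x ≤ K * (2 ^ s + 1) * (1 + ‖x‖) ^ s := by
  refine Real.sSup_le ?_ (by positivity)
  rintro _ ⟨u, hu, rfl⟩
  set z := x + (t * (1 + ‖x‖)) • u
  have hz : 1 + ‖z‖ ≤ 2 * (1 + ‖x‖) := by
    have hstep : ‖(t * (1 + ‖x‖)) • u‖ ≤ 1 + ‖x‖ := by
      rw [norm_smul, Real.norm_of_nonneg (by positivity)]
      exact (mul_le_of_le_one_right (by positivity) (mem_closedBall_zero_iff.1 hu)).trans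
        (mul_le_of_le_one_left (by positivity) ht₁)
    linarith [norm_add_le x ((t * (1 + ‖x‖)) • u)]
  calc ‖g z - g x‖ ≤ K * (1 + ‖z‖) ^ s + K * (1 + ‖x‖) ^ s :=
        (norm_sub_le _ _).trans (add_le_add (hg z) (hg x))
    _ ≤ K * (2 * (1 + ‖x‖)) ^ s + K * (1 + ‖x‖) ^ s := by gcongr
    _ = K * (2 ^ s + 1) * (1 + ‖x‖) ^ s := by
        rw [Real.mul_rpow zero_le_two (by positivity)]; ring

theorem norm_sub_le_relModulus_add [ProperSpace E] (hg : Continuous g) (hs : 0 ≤ s) (hK : 0 ≤ K)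
    (hgK : ∀ x, ‖g x‖ ≤ K * (1 + ‖x‖) ^ s) (ht₀ : 0 < t) (ht₁ : t ≤ 1) {r : ℝ}
    (hr : ‖y - x‖ ≤ r) : ‖g y - g x‖ ≤ relModulus g t x + 2 * K * (2 * r / t) ^ s := by
  have hr₀ : 0 ≤ r := (norm_nonneg _).trans hr
  rcases le_or_gt r (t * (1 + ‖x‖)) with hrt | hrt
  · exact (norm_sub_le_relModulus hg ht₀ (hr.trans hrt)).trans
      (le_add_of_nonneg_right (by positivity))
  · have hx : 1 + ‖x‖ ≤ r / t := (le_div_iff₀' ht₀).2 hrt.le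
    have hrt' : r ≤ r / t := le_div_self hr₀ ht₀ ht₁
    have hy : 1 + ‖y‖ ≤ 2 * r / t := by
      rw [mul_div_assoc]
      linarith [norm_le_norm_add_norm_sub' y x]
    calc ‖g y - g x‖ ≤ K * (1 + ‖y‖) ^ s + K * (1 + ‖x‖) ^ s :=
          (norm_sub_le _ _).trans (add_le_add (hgK y) (hgK x))
      _ ≤ K * (2 * r / t) ^ s + K * (2 * r / t) ^ s := by
          gcongr
          exact hx.trans (by rw [mul_div_assoc]; linarith)
      _ = 2 * K * (2 * r / t) ^ s := by ring
      _ ≤ relModulus g t x + 2 * K * (2 * r / t) ^ s :=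
          le_add_of_nonneg_left (relModulus_nonneg g t x)

end Modulus

section Pointwise

variable {E F : Type*} [NormedAddCommGroup E] [NormedSpace ℝ E] [ProperSpace E]
  [NormedAddCommGroup F] [NormedSpace ℝ F] {f : E → F} {K s t : ℝ}

/-- The remainder of the first-order Taylor expansion of `f` at `z.1`, evaluated at `z.2`. It is
a function on pairs so that it can be integrated against couplings. -/
noncomputable def taylorRemainder (f : E → F) (z : E × E) : F :=
  f z.2 - f z.1 - fderiv ℝ f z.1 (z.2 - z.1)

theorem norm_taylorRemainder_le (hf : ContDiff ℝ 1 f) (hs : 0 ≤ s)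
    (hK : ∀ x, ‖fderiv ℝ f x‖ ≤ K * (1 + ‖x‖) ^ s) (ht₀ : 0 < t) (ht₁ : t ≤ 1) (z : E × E) :
    ‖taylorRemainder f z‖ ≤ relModulus (fderiv ℝ f) t z.1 * ‖z.2 - z.1‖ +
      2 * K * (2 / t) ^ s * ‖z.2 - z.1‖ ^ (s + 1) := by
  obtain ⟨x, y⟩ := z
  have hK₀ : 0 ≤ K := by simpa using (norm_nonneg _).trans (hK 0)
  calc ‖f y - f x - fderiv ℝ f x (y - x)‖
      ≤ (relModulus (fderiv ℝ f) t x + 2 * K * (2 * ‖y - x‖ / t) ^ s) * ‖y - x‖ :=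
        (convex_segment x y).norm_image_sub_le_of_norm_fderiv_le' (𝕜 := ℝ)
          (fun w _ => hf.differentiable one_ne_zero w)
          (fun w hw => norm_sub_le_relModulus_add (hf.continuous_fderiv one_ne_zero) hs hK₀ hK
            ht₀ ht₁ (norm_sub_le_of_mem_segment hw))
          (left_mem_segment ℝ x y) (right_mem_segment ℝ x y)
    _ = _ := by
        rw [mul_div_right_comm, Real.mul_rpow (by positivity) (norm_nonneg _),
          Real.rpow_add_one' (norm_nonneg _) (by positivity)]
        ring

end Pointwise

section Displacement

theorem integrable_norm_rpow_of_memLp {Ω E : Type*} [MeasurableSpace Ω] [NormedAddCommGroup E]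
    {μ : Measure Ω} {p : ℝ} {u : Ω → E} (hp : 0 < p) (hu : MemLp u (ENNReal.ofReal p) μ) :
    Integrable (fun ω => ‖u ω‖ ^ p) μ := by
  simpa only [ENNReal.toReal_ofReal hp.le] using
    hu.integrable_norm_rpow (ENNReal.ofReal_pos.2 hp).ne' ENNReal.ofReal_ne_top

theorem memLp_of_integrable_norm_rpow {Ω E : Type*} [MeasurableSpace Ω] [NormedAddCommGroup E]
    {μ : Measure Ω} {p : ℝ} {u : Ω → E} (hp : 0 < p) (hu : AEStronglyMeasurable u μ)
    (h : Integrable (fun ω => ‖u ω‖ ^ p) μ) : MemLp u (ENNReal.ofReal p) μ := by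
  rw [← integrable_norm_rpow_iff hu (ENNReal.ofReal_pos.2 hp).ne' ENNReal.ofReal_ne_top]
  rwa [ENNReal.toReal_ofReal hp.le]

theorem memLp_comp_fst {X Y G : Type*} [MeasurableSpace X] [MeasurableSpace Y]
    [NormedAddCommGroup G] {μ : Measure X} {π : Measure (X × Y)} {r : ℝ≥0∞} {u : X → G}
    (hu : MemLp u r μ) (hπ : π.map Prod.fst = μ) : MemLp (fun z => u z.1) r π :=
  hu.comp_measurePreserving ⟨measurable_fst, hπ⟩

theorem integral_comp_fst {X Y G : Type*} [MeasurableSpace X] [MeasurableSpace Y]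
    [NormedAddCommGroup G] [NormedSpace ℝ G] {μ : Measure X} {π : Measure (X × Y)} {u : X → G}
    (hu : AEStronglyMeasurable u μ) (hπ : π.map Prod.fst = μ) :
    ∫ z, u z.1 ∂π = ∫ x, u x ∂μ := by
  subst hπ
  exact (integral_map measurable_fst.aemeasurable hu).symm

variable {E : Type*} [NormedAddCommGroup E] [MeasurableSpace E] {p : ℝ} {π : Measure (E × E)}

/-- The `L^p` size of the displacement `Y - X` under a coupling `π`, i.e. the `p`-th root of the
transport cost of `π` for the cost `‖y - x‖ ^ p`. -/
noncomputable def lpDisplacement (p : ℝ) (π : Measure (E × E)) : ℝ :=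
  (∫ z, ‖z.2 - z.1‖ ^ p ∂π) ^ (1 / p)

theorem lpDisplacement_nonneg (p : ℝ) (π : Measure (E × E)) : 0 ≤ lpDisplacement p π :=
  Real.rpow_nonneg (integral_nonneg fun _ => by positivity) _

theorem lpDisplacement_rpow (hp : 0 < p) (π : Measure (E × E)) :
    lpDisplacement p π ^ p = ∫ z, ‖z.2 - z.1‖ ^ p ∂π := by
  rw [lpDisplacement, one_div,
    Real.rpow_inv_rpow (integral_nonneg fun _ => by positivity) hp.ne']

end Displacement

section Integrated

variable {E F : Type*} [NormedAddCommGroup E] [MeasurableSpace E]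
  [NormedAddCommGroup F] {p q K t : ℝ} {μ : Measure E} [IsFiniteMeasure μ]

theorem memLp_const_mul_one_add_norm_rpow (hpq : p.HolderConjugate q)
    (hμ : MemLp id (ENNReal.ofReal p) μ) (K : ℝ) :
    MemLp (fun x : E => K * (1 + ‖x‖) ^ (p - 1)) (ENNReal.ofReal q) μ := by
  have h : MemLp (fun x : E => 1 + ‖x‖) (ENNReal.ofReal p) μ :=
    (memLp_const (1 : ℝ)).add (f := fun _ => (1 : ℝ)) (g := fun x : E => ‖x‖) hμ.norm
  have hq : ENNReal.ofReal p / ENNReal.ofReal (p - 1) = ENNReal.ofReal q := by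
    rw [← ENNReal.ofReal_div_of_pos hpq.sub_one_pos, hpq.conjugate_eq]
  have h' := (h.norm_rpow_div (ENNReal.ofReal (p - 1))).const_mul K
  rw [hq, ENNReal.toReal_ofReal hpq.sub_one_pos.le] at h'
  have hnorm (x : E) : ‖1 + ‖x‖‖ = 1 + ‖x‖ := Real.norm_of_nonneg (by positivity)
  simpa only [hnorm] using h'

variable [BorelSpace E] [NormedSpace ℝ E] [ProperSpace E] {g : E → F}

theorem memLp_relModulus (hpq : p.HolderConjugate q) (hμ : MemLp id (ENNReal.ofReal p) μ)
    (hg : Continuous g) (hK : 0 ≤ K) (hgK : ∀ x, ‖g x‖ ≤ K * (1 + ‖x‖) ^ (p - 1)) (ht₀ : 0 ≤ t)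
    (ht₁ : t ≤ 1) : MemLp (relModulus g t) (ENNReal.ofReal q) μ := by
  refine (memLp_const_mul_one_add_norm_rpow hpq hμ (K * (2 ^ (p - 1) + 1))).mono'
    ((continuous_uncurry_relModulus hg).comp (.prodMk_right t)).measurable.aestronglyMeasurable
    (Eventually.of_forall fun x => ?_)
  rw [Real.norm_of_nonneg (relModulus_nonneg g t x)]
  exact relModulus_le hpq.sub_one_pos.le hK hgK ht₀ ht₁ x

theorem tendsto_integral_relModulus_rpow (hpq : p.HolderConjugate q)
    (hμ : MemLp id (ENNReal.ofReal p) μ) (hg : Continuous g) (hK : 0 ≤ K)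
    (hgK : ∀ x, ‖g x‖ ≤ K * (1 + ‖x‖) ^ (p - 1)) :
    Tendsto (fun t => ∫ x, relModulus g t x ^ q ∂μ) (𝓝[>] 0) (𝓝 0) := by
  have hq : 0 < q := hpq.symm.pos
  have hcont := continuous_uncurry_relModulus hg
  have hlim : Tendsto (fun t => ∫ x, relModulus g t x ^ q ∂μ) (𝓝[>] 0) (𝓝 (∫ _, 0 ∂μ)) := by
    refine tendsto_integral_filter_of_dominated_convergence
      (fun x => ‖K * (2 ^ (p - 1) + 1) * (1 + ‖x‖) ^ (p - 1)‖ ^ q)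
      (Eventually.of_forall fun t =>
        ((hcont.comp (.prodMk_right t)).measurable.pow_const q).aestronglyMeasurable) ?_ ?_ ?_
    · filter_upwards [Ioc_mem_nhdsGT one_pos] with t ht
      refine Eventually.of_forall fun x => ?_
      have h₀ := relModulus_nonneg g t x
      rw [Real.norm_of_nonneg (by positivity)]
      gcongr
      exact (relModulus_le hpq.sub_one_pos.le hK hgK ht.1.le ht.2 x).trans (le_abs_self _)
    · exact integrable_norm_rpow_of_memLp hq
        (memLp_const_mul_one_add_norm_rpow hpq hμ (K * (2 ^ (p - 1) + 1)))
    · refine Eventually.of_forall fun x => ?_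
      have h : Tendsto (fun t => relModulus g t x) (𝓝 0) (𝓝 0) := by
        simpa only [Function.comp_def, Function.uncurry_apply_pair, relModulus_zero] using
          (hcont.comp (.prodMk_left x)).tendsto 0
      simpa only [Real.zero_rpow hq.ne'] using
        (h.mono_left nhdsWithin_le_nhds).rpow_const (.inr hq.le)
  simpa using hlim

variable {π : Measure (E × E)}

theorem integrable_relModulus_mul_norm_sub (hpq : p.HolderConjugate q)
    (hμ : MemLp id (ENNReal.ofReal p) μ) (hg : Continuous g) (hK : 0 ≤ K)
    (hgK : ∀ x, ‖g x‖ ≤ K * (1 + ‖x‖) ^ (p - 1)) (ht₀ : 0 ≤ t) (ht₁ : t ≤ 1)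
    (hfst : π.map Prod.fst = μ) (hπ : MemLp (fun z => z.2 - z.1) (ENNReal.ofReal p) π) :
    Integrable (fun z => relModulus g t z.1 * ‖z.2 - z.1‖) π :=
  have := hpq.symm.ennrealOfReal
  (memLp_comp_fst (memLp_relModulus hpq hμ hg hK hgK ht₀ ht₁) hfst).integrable_mul hπ.norm

theorem integral_relModulus_mul_norm_sub_le (hpq : p.HolderConjugate q)
    (hμ : MemLp id (ENNReal.ofReal p) μ) (hg : Continuous g) (hK : 0 ≤ K)
    (hgK : ∀ x, ‖g x‖ ≤ K * (1 + ‖x‖) ^ (p - 1)) (ht₀ : 0 ≤ t) (ht₁ : t ≤ 1)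
    (hfst : π.map Prod.fst = μ) (hπ : MemLp (fun z => z.2 - z.1) (ENNReal.ofReal p) π) :
    ∫ z, relModulus g t z.1 * ‖z.2 - z.1‖ ∂π ≤
      (∫ x, relModulus g t x ^ q ∂μ) ^ (1 / q) * lpDisplacement p π := by
  have hmeas : AEStronglyMeasurable (fun x => relModulus g t x ^ q) μ :=
    (((continuous_uncurry_relModulus hg).comp
      (.prodMk_right t)).measurable.pow_const q).aestronglyMeasurable
  rw [← integral_comp_fst hmeas hfst, lpDisplacement]
  exact integral_mul_le_Lp_mul_Lq_of_nonneg hpq.symm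
    (Eventually.of_forall fun z : E × E => relModulus_nonneg g t z.1)
    (Eventually.of_forall fun z : E × E => norm_nonneg (z.2 - z.1))
    (memLp_comp_fst (memLp_relModulus hpq hμ hg hK hgK ht₀ ht₁) hfst) hπ.norm

variable [NormedSpace ℝ F] {f : E → F}

theorem integrable_taylorRemainder (hpq : p.HolderConjugate q)
    (hμ : MemLp id (ENNReal.ofReal p) μ) (hf : ContDiff ℝ 1 f)
    (hK : ∀ x, ‖fderiv ℝ f x‖ ≤ K * (1 + ‖x‖) ^ (p - 1))
    (hfst : π.map Prod.fst = μ) (hπ : MemLp (fun z => z.2 - z.1) (ENNReal.ofReal p) π) :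
    Integrable (taylorRemainder f) π := by
  have hK₀ : 0 ≤ K := by simpa using (norm_nonneg _).trans (hK 0)
  have hcont := hf.continuous_fderiv one_ne_zero
  refine ((integrable_relModulus_mul_norm_sub hpq hμ hcont hK₀ hK zero_le_one le_rfl hfst hπ).add
    ((integrable_norm_rpow_of_memLp hpq.pos hπ).const_mul (2 * K * (2 / 1) ^ (p - 1)))).mono'
      (Continuous.aestronglyMeasurable ?_) (Eventually.of_forall fun z => ?_)
  · have := hf.continuous
    unfold taylorRemainder
    fun_prop
  · exact (norm_taylorRemainder_le hf hpq.sub_one_pos.le hK one_pos le_rfl z).trans_eq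
      (by simp only [sub_add_cancel, Pi.add_apply])

theorem integral_norm_taylorRemainder_le (hpq : p.HolderConjugate q)
    (hμ : MemLp id (ENNReal.ofReal p) μ) (hf : ContDiff ℝ 1 f)
    (hK : ∀ x, ‖fderiv ℝ f x‖ ≤ K * (1 + ‖x‖) ^ (p - 1)) (ht₀ : 0 < t) (ht₁ : t ≤ 1)
    (hfst : π.map Prod.fst = μ) (hπ : MemLp (fun z => z.2 - z.1) (ENNReal.ofReal p) π) :
    ∫ z, ‖taylorRemainder f z‖ ∂π ≤
      ((∫ x, relModulus (fderiv ℝ f) t x ^ q ∂μ) ^ (1 / q) +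
        2 * K * (2 / t) ^ (p - 1) * lpDisplacement p π ^ (p - 1)) * lpDisplacement p π := by
  have hK₀ : 0 ≤ K := by simpa using (norm_nonneg _).trans (hK 0)
  have hcont := hf.continuous_fderiv one_ne_zero
  have hint := integrable_relModulus_mul_norm_sub hpq hμ hcont hK₀ hK ht₀.le ht₁ hfst hπ
  have hint' := (integrable_norm_rpow_of_memLp hpq.pos hπ).const_mul (2 * K * (2 / t) ^ (p - 1))
  calc ∫ z, ‖taylorRemainder f z‖ ∂π
      ≤ ∫ z, (relModulus (fderiv ℝ f) t z.1 * ‖z.2 - z.1‖ +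
          2 * K * (2 / t) ^ (p - 1) * ‖z.2 - z.1‖ ^ p) ∂π :=
        integral_mono_of_nonneg (Eventually.of_forall fun z => norm_nonneg _) (hint.add hint')
          (Eventually.of_forall fun z => by
            simpa only [sub_add_cancel] using
              norm_taylorRemainder_le hf hpq.sub_one_pos.le hK ht₀ ht₁ z)
    _ = ∫ z, relModulus (fderiv ℝ f) t z.1 * ‖z.2 - z.1‖ ∂π +
          2 * K * (2 / t) ^ (p - 1) * lpDisplacement p π ^ p := by
        rw [integral_add hint hint', integral_const_mul, lpDisplacement_rpow hpq.pos]
    _ ≤ (∫ x, relModulus (fderiv ℝ f) t x ^ q ∂μ) ^ (1 / q) * lpDisplacement p π +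
          2 * K * (2 / t) ^ (p - 1) * lpDisplacement p π ^ p := by
        gcongr
        exact integral_relModulus_mul_norm_sub_le hpq hμ hcont hK₀ hK ht₀.le ht₁ hfst hπ
    _ = _ := by
        have hsplit :
            lpDisplacement p π ^ p = lpDisplacement p π ^ (p - 1) * lpDisplacement p π := by
          rw [← Real.rpow_add_one' (lpDisplacement_nonneg p π) (by simp [hpq.ne_zero]),
            sub_add_cancel]
        rw [hsplit]
        ring

theorem isLittleO_integral_norm_taylorRemainder (hpq : p.HolderConjugate q)
    (hμ : MemLp id (ENNReal.ofReal p) μ) (hf : ContDiff ℝ 1 f)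
    (hK : ∀ x, ‖fderiv ℝ f x‖ ≤ K * (1 + ‖x‖) ^ (p - 1)) {ι : Type*} {l : Filter ι}
    {π : ι → Measure (E × E)} (hfst : ∀ i, (π i).map Prod.fst = μ)
    (hπ : ∀ i, MemLp (fun z => z.2 - z.1) (ENNReal.ofReal p) (π i))
    (h₀ : Tendsto (fun i => lpDisplacement p (π i)) l (𝓝 0)) :
    (fun i => ∫ z, ‖taylorRemainder f z‖ ∂π i) =o[l] fun i => lpDisplacement p (π i) := by
  have hK₀ : 0 ≤ K := by simpa using (norm_nonneg _).trans (hK 0)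
  have hs := hpq.sub_one_pos
  have hmodulus : Tendsto (fun t => (∫ x, relModulus (fderiv ℝ f) t x ^ q ∂μ) ^ (1 / q))
      (𝓝[>] 0) (𝓝 0) := by
    simpa only [Real.zero_rpow hpq.symm.one_div_pos.ne'] using
      (tendsto_integral_relModulus_rpow hpq hμ (hf.continuous_fderiv one_ne_zero) hK₀
        hK).rpow_const (.inr hpq.symm.one_div_nonneg)
  refine isLittleO_iff.2 fun c hc => ?_
  obtain ⟨t, ht, ht₀, ht₁⟩ : ∃ t, (∫ x, relModulus (fderiv ℝ f) t x ^ q ∂μ) ^ (1 / q) < c / 2 ∧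
      0 < t ∧ t ≤ 1 :=
    ((hmodulus.eventually_lt_const (half_pos hc)).and (Ioc_mem_nhdsGT one_pos)).exists
  have htail : Tendsto (fun i => 2 * K * (2 / t) ^ (p - 1) * lpDisplacement p (π i) ^ (p - 1))
      l (𝓝 0) := by
    simpa only [Real.zero_rpow hs.ne', mul_zero] using
      (h₀.rpow_const (.inr hs.le)).const_mul (2 * K * (2 / t) ^ (p - 1))
  filter_upwards [htail.eventually_lt_const (half_pos hc)] with i hi
  have hD := lpDisplacement_nonneg p (π i)
  rw [Real.norm_of_nonneg (integral_nonneg fun _ => norm_nonneg _), Real.norm_of_nonneg hD]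
  refine (integral_norm_taylorRemainder_le hpq hμ hf hK ht₀ ht₁ (hfst i) (hπ i)).trans ?_
  gcongr
  linarith

end Integrated

end TaylorRemainder

section PathSpace

variable {N d : ℕ} {p q : ℝ}

theorem lpnorm_nonneg (e : ℝ) (v : Fin d → ℝ) : 0 ≤ lpnorm e v :=
  Real.rpow_nonneg (Finset.sum_nonneg fun _ _ => by positivity) _

theorem lpnorm_rpow {e : ℝ} (he : 0 < e) (v : Fin d → ℝ) : lpnorm e v ^ e = ∑ i, |v i| ^ e := by
  rw [lpnorm, one_div, Real.rpow_inv_rpow (Finset.sum_nonneg fun _ _ => by positivity) he.ne']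

theorem abs_apply_le_lpnorm {e : ℝ} (he : 0 < e) (v : Fin d → ℝ) (i : Fin d) :
    |v i| ≤ lpnorm e v := by
  rw [← Real.rpow_le_rpow_iff (abs_nonneg _) (lpnorm_nonneg _ _) he, lpnorm_rpow he]
  exact Finset.single_le_sum (f := fun i => |v i| ^ e) (fun _ _ => by positivity)
    (Finset.mem_univ i)

theorem coord_zero (x : PathD N d) : coord x 0 = 0 := by simp [coord]

theorem coord_succ (x : PathD N d) (k : Fin N) : coord x (k + 1) = x k := by
  simp [coord]

/-- The `j`-th component of the increment `Δx_n = x_n - x_{n-1}` as a continuous linear functional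
of the path. It vanishes for `n = 0`, and for `n = N + 1` it equals `-x_N` as `coord` is then
zero. -/
noncomputable def incr (n : ℕ) (j : Fin d) : PathD N d →L[ℝ] ℝ :=
  LinearMap.toContinuousLinearMap
    { toFun := fun x => coord x n j - coord x (n - 1) j
      map_add' := fun x y => by unfold coord; split_ifs <;> simp <;> ring
      map_smul' := fun c x => by unfold coord; split_ifs <;> simp [mul_sub] }

theorem incr_apply (n : ℕ) (j : Fin d) (x : PathD N d) :
    incr n j x = coord x n j - coord x (n - 1) j := rfl

theorem sum_Icc_incr (m : ℕ) (j : Fin d) (x : PathD N d) :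
    ∑ n ∈ Finset.Icc 1 m, incr n j x = coord x m j := by
  induction m with
  | zero => simp [coord_zero]
  | succ m ih => rw [Finset.sum_Icc_succ_top (by lia), ih, incr_apply]; simp

theorem apply_eq_sum_incr (x : PathD N d) (k : Fin N) (j : Fin d) :
    x k j = ∑ n ∈ Finset.Icc 1 N with n ≤ (k : ℕ) + 1, incr n j x := by
  have hfilter : {n ∈ Finset.Icc 1 N | n ≤ (k : ℕ) + 1} = Finset.Icc 1 ((k : ℕ) + 1) := by
    ext n
    simp only [Finset.mem_filter, Finset.mem_Icc]
    lia
  rw [hfilter, sum_Icc_incr, coord_succ]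

theorem fderiv_eq_sum_Dn_mul_incr (f : PathD N d → ℝ) (x v : PathD N d) :
    fderiv ℝ f x v = ∑ n ∈ Finset.Icc 1 N, ∑ j, Dn f n x j * incr n j v := by
  have hv : v = ∑ k, ∑ j, v k j • (Pi.single k (Pi.single j 1) : PathD N d) := by
    ext k j
    simp [Finset.sum_apply, Pi.single_apply, apply_ite, ite_apply]
  calc fderiv ℝ f x v
      = ∑ k, ∑ j, v k j * fderiv ℝ f x (Pi.single k (Pi.single j 1)) := by
        conv_lhs => rw [hv]
        simp only [map_sum, map_smul, smul_eq_mul]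
    _ = ∑ k : Fin N, ∑ j, ∑ n ∈ Finset.Icc 1 N, (if n ≤ (k : ℕ) + 1 then
          fderiv ℝ f x (Pi.single k (Pi.single j 1)) else 0) * incr n j v := by
        refine Finset.sum_congr rfl fun k _ => Finset.sum_congr rfl fun j _ => ?_
        rw [apply_eq_sum_incr v k j, Finset.sum_filter, Finset.sum_mul]
        refine Finset.sum_congr rfl fun n _ => ?_
        rw [ite_mul, ite_mul, zero_mul, zero_mul, mul_comm]
    _ = ∑ n ∈ Finset.Icc 1 N, ∑ j, Dn f n x j * incr n j v := by
        simp only [Dn, Finset.sum_mul]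
        rw [Finset.sum_comm]
        simp only [Finset.sum_comm (s := Finset.univ (α := Fin N)) (t := Finset.Icc 1 N)]
        rw [Finset.sum_comm]

theorem norm_fderiv_le_of_lpnorm_Dn_le (hq : 0 < q) {f : PathD N d → ℝ} {x : PathD N d} {b : ℝ}
    (h : ∀ n, lpnorm q (Dn f n x) ≤ b) :
    ‖fderiv ℝ f x‖ ≤ (∑ n ∈ Finset.Icc 1 N, ∑ j, ‖incr (N := N) (d := d) n j‖) * b := by
  have hb : 0 ≤ b := (lpnorm_nonneg q _).trans (h 0)
  refine ContinuousLinearMap.opNorm_le_bound _ (by positivity) fun v => ?_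
  rw [fderiv_eq_sum_Dn_mul_incr, Finset.sum_mul, Finset.sum_mul]
  refine norm_sum_le_of_le _ fun n _ => ?_
  rw [Finset.sum_mul, Finset.sum_mul]
  refine norm_sum_le_of_le _ fun j _ => ?_
  rw [norm_mul, mul_comm _ b, mul_assoc]
  exact mul_le_mul ((abs_apply_le_lpnorm hq _ j).trans (h n)) ((incr n j).le_opNorm v)
    (norm_nonneg _) hb

theorem continuous_Dn {f : PathD N d → ℝ} (hf : ContDiff ℝ 1 f) (n : ℕ) :
    Continuous (Dn f n) := by
  have h : Continuous (fderiv ℝ f) := hf.continuous_fderiv one_ne_zero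
  refine continuous_pi fun j => continuous_finsetSum _ fun k _ => ?_
  split_ifs
  · exact h.clm_apply continuous_const
  · exact continuous_const

theorem memLp_Dn_of_lpnorm_le (hq : 0 < q) {μ : Measure (PathD N d)} {f : PathD N d → ℝ}
    (hf : ContDiff ℝ 1 f) {n : ℕ} {r : ℝ≥0∞} {b : PathD N d → ℝ}
    (h : ∀ x, lpnorm q (Dn f n x) ≤ b x) (hb : MemLp b r μ) : MemLp (Dn f n) r μ :=
  hb.mono' (continuous_Dn hf n).aestronglyMeasurable <| Eventually.of_forall fun x =>
    ((pi_norm_le_iff_of_nonneg (lpnorm_nonneg q _)).2 (abs_apply_le_lpnorm hq _)).trans (h x)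

theorem Fn_le (n : ℕ) : Fn N d n ≤ MeasurableSpace.pi := by
  refine Measurable.comap_le (measurable_pi_lambda _ fun i => ?_)
  split_ifs <;> fun_prop

theorem comap_Fn_le {Ω : Type*} {mΩ : MeasurableSpace Ω} {φ : Ω → PathD N d} (hφ : Measurable φ)
    (n : ℕ) : (Fn N d n).comap φ ≤ mΩ :=
  (MeasurableSpace.comap_mono (Fn_le n)).trans hφ.comap_le

theorem Fn_self : Fn N d N = MeasurableSpace.pi := by
  have hid : (fun (x : PathD N d) (i : Fin N) => if (i : ℕ) + 1 ≤ N then x i else 0) = id := by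
    ext x i j
    simp
  rw [Fn, hid, MeasurableSpace.comap_id]

theorem measurable_coord_Fn {m n : ℕ} (h : m ≤ n) :
    Measurable[Fn N d n] (fun x : PathD N d => coord x m) := by
  by_cases hm : 1 ≤ m ∧ m ≤ N
  · have hcomp : (fun x : PathD N d => coord x m) = (fun y => y ⟨m - 1, by lia⟩) ∘
        (fun (x : PathD N d) (i : Fin N) => if (i : ℕ) + 1 ≤ n then x i else 0) := by
      ext x j
      have : m - 1 < n := by lia
      simp [coord, hm, this]
    rw [hcomp]
    exact (measurable_pi_apply _).comp (comap_measurable _)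
  · simp only [coord, hm, dite_false]
    exact measurable_const

theorem measurable_incr_Fn (n : ℕ) (j : Fin d) : Measurable[Fn N d n] (incr (N := N) n j) := by
  have h {m : ℕ} (hm : m ≤ n) : Measurable[Fn N d n] (fun x : PathD N d => coord x m j) :=
    (measurable_pi_apply j).comp (measurable_coord_Fn hm)
  exact (h le_rfl).sub (h (Nat.sub_le n 1))

end PathSpace

section Cost

variable {N d : ℕ} {p : ℝ} {π : Measure (PathD N d × PathD N d)}

theorem cN_nonneg (p : ℝ) (x y : PathD N d) : 0 ≤ cN p x y :=
  Finset.sum_nonneg fun _ _ => Real.rpow_nonneg (lpnorm_nonneg _ _) _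

theorem cN_eq_sum_incr (hp : 0 < p) (x y : PathD N d) :
    cN p x y = ∑ n ∈ Finset.Icc 1 N, ∑ j, |incr n j (y - x)| ^ p := by
  refine Finset.sum_congr rfl fun n _ => ?_
  rw [lpnorm_rpow hp]
  refine Finset.sum_congr rfl fun j _ => ?_
  rw [map_sub, abs_sub_comm]
  rfl

theorem abs_incr_sub_le_cN_rpow (hp : 0 < p) (x y : PathD N d) {n : ℕ}
    (hn : n ∈ Finset.Icc 1 N) (j : Fin d) : |incr n j (y - x)| ≤ cN p x y ^ (1 / p) := by
  rw [one_div, Real.le_rpow_inv_iff_of_pos (abs_nonneg _) (cN_nonneg p x y) hp,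
    cN_eq_sum_incr hp]
  calc |incr n j (y - x)| ^ p ≤ ∑ j, |incr n j (y - x)| ^ p :=
        Finset.single_le_sum (f := fun j => |incr n j (y - x)| ^ p) (fun _ _ => by positivity)
          (Finset.mem_univ j)
    _ ≤ ∑ n ∈ Finset.Icc 1 N, ∑ j, |incr n j (y - x)| ^ p :=
        Finset.single_le_sum (f := fun n => ∑ j, |incr n j (y - x)| ^ p)
          (fun _ _ => by positivity) hn

theorem norm_sub_le_mul_cN_rpow (hp : 0 < p) (x y : PathD N d) :
    ‖y - x‖ ≤ N * cN p x y ^ (1 / p) := by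
  have hc : 0 ≤ cN p x y ^ (1 / p) := Real.rpow_nonneg (cN_nonneg p x y) _
  refine (pi_norm_le_iff_of_nonneg (by positivity)).2 fun k =>
    (pi_norm_le_iff_of_nonneg (by positivity)).2 fun j => ?_
  calc ‖(y - x) k j‖ = ‖∑ n ∈ Finset.Icc 1 N with n ≤ (k : ℕ) + 1, incr n j (y - x)‖ := by
        rw [apply_eq_sum_incr (y - x) k j]
    _ ≤ ∑ _n ∈ {n ∈ Finset.Icc 1 N | n ≤ (k : ℕ) + 1}, cN p x y ^ (1 / p) :=
        norm_sum_le_of_le _ fun _ hn => abs_incr_sub_le_cN_rpow hp x y (Finset.mem_filter.1 hn).1 j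
    _ ≤ ∑ _n ∈ Finset.Icc 1 N, cN p x y ^ (1 / p) :=
        Finset.sum_le_sum_of_subset_of_nonneg (Finset.filter_subset _ _) fun _ _ _ => hc
    _ = N * cN p x y ^ (1 / p) := by simp

theorem norm_sub_rpow_le_mul_cN (hp : 0 < p) (x y : PathD N d) :
    ‖y - x‖ ^ p ≤ N ^ p * cN p x y := by
  have hc := cN_nonneg p x y
  calc ‖y - x‖ ^ p ≤ (N * cN p x y ^ (1 / p)) ^ p := by
        gcongr
        exact norm_sub_le_mul_cN_rpow hp x y
    _ = N ^ p * cN p x y := by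
        rw [Real.mul_rpow (by positivity) (by positivity), one_div, Real.rpow_inv_rpow hc hp.ne']

theorem costD_nonneg (p : ℝ) (π : Measure (PathD N d × PathD N d)) : 0 ≤ costD p π :=
  integral_nonneg fun _ => cN_nonneg p _ _

theorem memLp_sub_of_integrable_cN (hp : 0 < p) (hcost : Integrable (fun z => cN p z.1 z.2) π) :
    MemLp (fun z => z.2 - z.1) (ENNReal.ofReal p) π := by
  have hmeas : Measurable fun z : PathD N d × PathD N d => z.2 - z.1 :=
    measurable_snd.sub measurable_fst
  refine memLp_of_integrable_norm_rpow hp hmeas.aestronglyMeasurable ?_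
  refine (hcost.const_mul ((N : ℝ) ^ p)).mono' (hmeas.norm.pow_const p).aestronglyMeasurable
    (Eventually.of_forall fun z => ?_)
  rw [Real.norm_of_nonneg (by positivity)]
  exact norm_sub_rpow_le_mul_cN hp z.1 z.2

theorem lpDisplacement_le_mul_costD_rpow (hp : 0 < p)
    (hcost : Integrable (fun z => cN p z.1 z.2) π) :
    lpDisplacement p π ≤ N * costD p π ^ (1 / p) := by
  refine (Real.rpow_le_rpow_iff (lpDisplacement_nonneg p π)
    (mul_nonneg N.cast_nonneg (Real.rpow_nonneg (costD_nonneg p π) _)) hp).1 ?_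
  calc lpDisplacement p π ^ p = ∫ z, ‖z.2 - z.1‖ ^ p ∂π := lpDisplacement_rpow hp π
    _ ≤ ∫ z, (N : ℝ) ^ p * cN p z.1 z.2 ∂π :=
        integral_mono (integrable_norm_rpow_of_memLp hp (memLp_sub_of_integrable_cN hp hcost))
          (hcost.const_mul _) fun z => norm_sub_rpow_le_mul_cN hp z.1 z.2
    _ = (N * costD p π ^ (1 / p)) ^ p := by
        rw [integral_const_mul, ← costD, Real.mul_rpow N.cast_nonneg
          (Real.rpow_nonneg (costD_nonneg p π) _), one_div,
          Real.rpow_inv_rpow (costD_nonneg p π) hp.ne']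

theorem costD_eq_sum_integral_incr (hp : 0 < p)
    (hπ : MemLp (fun z => z.2 - z.1) (ENNReal.ofReal p) π) :
    costD p π = ∑ n ∈ Finset.Icc 1 N, ∑ j, ∫ z, |incr n j (z.2 - z.1)| ^ p ∂π := by
  have hint (n : ℕ) (j : Fin d) : Integrable (fun z => |incr n j (z.2 - z.1)| ^ p) π :=
    integrable_norm_rpow_of_memLp hp (hπ.continuousLinearMap_comp (incr n j))
  simp only [costD, cN_eq_sum_incr hp]
  rw [integral_finsetSum _ fun n _ => integrable_finsetSum _ fun j _ => hint n j]
  exact Finset.sum_congr rfl fun n _ => integral_finsetSum _ fun j _ => hint n j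

end Cost

section FirstOrder

variable {p q : ℝ}

theorem memLp_snd_of_memLp_fst_of_memLp_sub {E : Type*} [NormedAddCommGroup E]
    [MeasurableSpace E] {π : Measure (E × E)} {r : ℝ≥0∞} (h : MemLp (fun z => z.1) r π)
    (h' : MemLp (fun z => z.2 - z.1) r π) : MemLp (fun z => z.2) r π := by
  simpa only [Pi.add_def, sub_add_cancel] using h'.add h

theorem sum_integral_mul_le_Lp_mul_Lq {Ω ι : Type*} [MeasurableSpace Ω] {π : Measure Ω}
    (hpq : p.HolderConjugate q) (s : Finset ι) {u v : ι → Ω → ℝ}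
    (hu : ∀ i, MemLp (u i) (ENNReal.ofReal p) π) (hv : ∀ i, MemLp (v i) (ENNReal.ofReal q) π) :
    ∑ i ∈ s, ∫ ω, u i ω * v i ω ∂π ≤
      (∑ i ∈ s, ∫ ω, |u i ω| ^ p ∂π) ^ (1 / p) * (∑ i ∈ s, ∫ ω, |v i ω| ^ q ∂π) ^ (1 / q) := by
  have hU (i : ι) : 0 ≤ ∫ ω, |u i ω| ^ p ∂π := integral_nonneg fun _ => by positivity
  have hV (i : ι) : 0 ≤ ∫ ω, |v i ω| ^ q ∂π := integral_nonneg fun _ => by positivity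
  calc ∑ i ∈ s, ∫ ω, u i ω * v i ω ∂π
      ≤ ∑ i ∈ s, (∫ ω, |u i ω| ^ p ∂π) ^ (1 / p) * (∫ ω, |v i ω| ^ q ∂π) ^ (1 / q) := by
        refine Finset.sum_le_sum fun i _ => ?_
        calc ∫ ω, u i ω * v i ω ∂π ≤ ∫ ω, |u i ω * v i ω| ∂π :=
              (le_abs_self _).trans abs_integral_le_integral_abs
          _ = ∫ ω, |u i ω| * |v i ω| ∂π := by simp only [abs_mul]
          _ ≤ _ := integral_mul_norm_le_Lp_mul_Lq hpq (hu i) (hv i)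
    _ ≤ (∑ i ∈ s, ((∫ ω, |u i ω| ^ p ∂π) ^ (1 / p)) ^ p) ^ (1 / p) *
          (∑ i ∈ s, ((∫ ω, |v i ω| ^ q ∂π) ^ (1 / q)) ^ q) ^ (1 / q) :=
        Real.inner_le_Lp_mul_Lq_of_nonneg s hpq (fun i _ => Real.rpow_nonneg (hU i) _)
          (fun i _ => Real.rpow_nonneg (hV i) _)
    _ = _ := by
        simp only [one_div, Real.rpow_inv_rpow (hU _) hpq.ne_zero,
          Real.rpow_inv_rpow (hV _) hpq.symm.ne_zero]

theorem condExp_apply_ae_eq {X ι : Type*} [Fintype ι] {m _ : MeasurableSpace X}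
    {μ : Measure X} {u : X → ι → ℝ} (hu : Integrable u μ) (i : ι) :
    (fun x => (μ[u | m]) x i) =ᵐ[μ] μ[fun x => u x i | m] :=
  (ContinuousLinearMap.proj (R := ℝ) (φ := fun _ : ι => ℝ) i).comp_condExp_comm hu

theorem memLp_apply {X ι : Type*} [Fintype ι] [MeasurableSpace X] {μ : Measure X} {r : ℝ≥0∞}
    {u : X → ι → ℝ} (hu : MemLp u r μ) (i : ι) : MemLp (fun x => u x i) r μ :=
  hu.continuousLinearMap_comp (ContinuousLinearMap.proj (R := ℝ) (φ := fun _ : ι => ℝ) i)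

variable {N d : ℕ} {μ : Measure (PathD N d)} {π : Measure (PathD N d × PathD N d)}

theorem optionalNorm_eq_sum_integral_condExp (hpq : p.HolderConjugate q) {f : PathD N d → ℝ}
    (hD : ∀ n, MemLp (Dn f n) (ENNReal.ofReal q) μ) (hfst : π.map Prod.fst = μ) :
    optionalNorm q μ f = (∑ n ∈ Finset.Icc 1 N, ∑ j,
      ∫ z, |(μ[Dn f n | Fn N d n]) z.1 j| ^ q ∂π) ^ (1 / q) := by
  have hq := hpq.symm.pos
  have hE (n : ℕ) (j : Fin d) :
      MemLp (fun x => (μ[Dn f n | Fn N d n]) x j) (ENNReal.ofReal q) μ :=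
    memLp_apply ((hD n).condExp (ENNReal.one_le_ofReal.2 hpq.symm.lt.le)) j
  have hint (n : ℕ) (j : Fin d) :
      Integrable (fun x => |(μ[Dn f n | Fn N d n]) x j| ^ q) μ :=
    integrable_norm_rpow_of_memLp hq (hE n j)
  unfold optionalNorm
  congr 1
  refine Finset.sum_congr rfl fun n _ => ?_
  simp only [lpnorm_rpow hq]
  rw [integral_finsetSum _ fun j _ => hint n j]
  exact Finset.sum_congr rfl fun j _ =>
    (integral_comp_fst (hint n j).aestronglyMeasurable hfst).symm

theorem integrable_Dn_mul_incr (hpq : p.HolderConjugate q) (hfst : π.map Prod.fst = μ)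
    (hπ : MemLp (fun z => z.2 - z.1) (ENNReal.ofReal p) π) {f : PathD N d → ℝ} {n : ℕ}
    (hD : MemLp (Dn f n) (ENNReal.ofReal q) μ) (j : Fin d) :
    Integrable (fun z => Dn f n z.1 j * incr n j (z.2 - z.1)) π :=
  have := hpq.symm.ennrealOfReal
  (memLp_comp_fst (memLp_apply hD j) hfst).integrable_mul (hπ.continuousLinearMap_comp (incr n j))

theorem integrable_fderiv_sub (hpq : p.HolderConjugate q) (hfst : π.map Prod.fst = μ)
    (hπ : MemLp (fun z => z.2 - z.1) (ENNReal.ofReal p) π) {f : PathD N d → ℝ}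
    (hD : ∀ n, MemLp (Dn f n) (ENNReal.ofReal q) μ) :
    Integrable (fun z => fderiv ℝ f z.1 (z.2 - z.1)) π := by
  simp only [fderiv_eq_sum_Dn_mul_incr]
  exact integrable_finsetSum _ fun n _ => integrable_finsetSum _ fun j _ =>
    integrable_Dn_mul_incr hpq hfst hπ (hD n) j

variable [IsFiniteMeasure π]

/-- Causality makes the projection invisible on both sides: `v(X)` is `F_n`-measurable, while
`v(Y)` carries no information on `X` beyond `F_n`. -/
theorem IsCausalStar.integral_condExp_mul_sub (h : IsCausalStar μ π) (hpq : p.HolderConjugate q)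
    {g v : PathD N d → ℝ} (hgm : Measurable g) (hg : MemLp g (ENNReal.ofReal q) μ) {n : ℕ}
    (hvm : Measurable[Fn N d n] v) (hvX : MemLp (fun z => v z.1) (ENNReal.ofReal p) π)
    (hvY : MemLp (fun z => v z.2) (ENNReal.ofReal p) π) :
    ∫ z, (μ[g | Fn N d n]) z.1 * (v z.2 - v z.1) ∂π = ∫ z, g z.1 * (v z.2 - v z.1) ∂π := by
  obtain ⟨rfl, hcausal⟩ := h
  have hpq' := hpq.symm.ennrealOfReal
  have hq₁ : 1 ≤ ENNReal.ofReal q := ENNReal.one_le_ofReal.2 hpq.symm.lt.le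
  have hle₁ : (Fn N d n).comap (Prod.snd : PathD N d × PathD N d → _) ≤ Prod.instMeasurableSpace :=
    comap_Fn_le measurable_snd n
  have hle₂ : (Fn N d N).comap (Prod.fst : PathD N d × PathD N d → _) ≤ Prod.instMeasurableSpace :=
    comap_Fn_le measurable_fst N
  have hle' : (Fn N d n).comap (Prod.fst : PathD N d × PathD N d → _) ≤
      (Fn N d N).comap Prod.fst :=
    MeasurableSpace.comap_mono ((Fn_le n).trans Fn_self.ge)
  have hgX : MemLp (fun z => g z.1) (ENNReal.ofReal q) π := memLp_comp_fst hg rfl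
  have hgi : Integrable (fun z => g z.1) π := hgX.integrable hq₁
  have hGX : MemLp (π[fun z => g z.1 | (Fn N d n).comap Prod.fst]) (ENNReal.ofReal q) π :=
    hgX.condExp hq₁
  have hgs : StronglyMeasurable[(Fn N d N).comap Prod.fst]
      (fun z : PathD N d × PathD N d => g z.1) := by
    rw [Fn_self]
    exact hgm.stronglyMeasurable.comp_measurable (comap_measurable _)
  have hX := integral_condExp_mul_of_stronglyMeasurable (hle'.trans hle₂)
    (hvm.stronglyMeasurable.comp_measurable (comap_measurable _)) hgi (hgX.integrable_mul hvX)
  have hY := (hcausal n).integral_condExp_mul hle' hle₁ hle₂ hgs hgi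
    (hvm.stronglyMeasurable.comp_measurable (comap_measurable _)) (hgX.integrable_mul hvY)
    (hGX.integrable_mul hvY)
  calc ∫ z, ((π.map Prod.fst)[g | Fn N d n]) z.1 * (v z.2 - v z.1) ∂π
      = ∫ z, (π[fun z => g z.1 | (Fn N d n).comap Prod.fst]) z * (v z.2 - v z.1) ∂π := by
        refine integral_congr_ae ?_
        filter_upwards [condExp_map_comp_ae_eq (Fn_le n) measurable_fst
          (hg.integrable hq₁)] with z hz
        exact congrArg (· * (v z.2 - v z.1)) hz
    _ = ∫ z, g z.1 * (v z.2 - v z.1) ∂π := by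
        simp only [mul_sub]
        exact (integral_sub (hGX.integrable_mul hvY) (hGX.integrable_mul hvX)).trans <|
          (congrArg₂ _ hY hX).trans
            (integral_sub (hgX.integrable_mul hvY) (hgX.integrable_mul hvX)).symm

theorem IsCausalStar.integral_Dn_mul_incr (h : IsCausalStar μ π) (hpq : p.HolderConjugate q)
    (hμ : MemLp id (ENNReal.ofReal p) μ)
    (hπ : MemLp (fun z => z.2 - z.1) (ENNReal.ofReal p) π) {f : PathD N d → ℝ}
    (hf : ContDiff ℝ 1 f) {n : ℕ} (hD : MemLp (Dn f n) (ENNReal.ofReal q) μ) (j : Fin d) :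
    ∫ z, Dn f n z.1 j * incr n j (z.2 - z.1) ∂π =
      ∫ z, incr n j (z.2 - z.1) * (μ[Dn f n | Fn N d n]) z.1 j ∂π := by
  have hfin : IsFiniteMeasure μ := h.1 ▸ inferInstance
  have hX : MemLp (fun z => z.1) (ENNReal.ofReal p) π := memLp_comp_fst hμ h.1
  have hY : MemLp (fun z => z.2) (ENNReal.ofReal p) π :=
    memLp_snd_of_memLp_fst_of_memLp_sub hX hπ
  have hE : (fun z : PathD N d × PathD N d => (μ[Dn f n | Fn N d n]) z.1 j) =ᵐ[π]
      fun z => (μ[fun x => Dn f n x j | Fn N d n]) z.1 :=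
    (MeasurePreserving.mk measurable_fst h.1).quasiMeasurePreserving.ae_eq_comp
      (condExp_apply_ae_eq (hD.integrable (ENNReal.one_le_ofReal.2 hpq.symm.lt.le)) j)
  calc ∫ z, Dn f n z.1 j * incr n j (z.2 - z.1) ∂π
      = ∫ z, (μ[fun x => Dn f n x j | Fn N d n]) z.1 * (incr n j z.2 - incr n j z.1) ∂π := by
        simp only [map_sub]
        exact (h.integral_condExp_mul_sub hpq
          ((measurable_pi_apply j).comp (continuous_Dn hf n).measurable) (memLp_apply hD j)
          (measurable_incr_Fn n j) (hX.continuousLinearMap_comp (incr n j))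
          (hY.continuousLinearMap_comp (incr n j))).symm
    _ = ∫ z, incr n j (z.2 - z.1) * (μ[Dn f n | Fn N d n]) z.1 j ∂π := by
        refine integral_congr_ae ?_
        filter_upwards [hE] with z hz
        rw [hz, map_sub, mul_comm]

theorem IsCausalStar.integral_fderiv_sub_le (h : IsCausalStar μ π) (hpq : p.HolderConjugate q)
    (hμ : MemLp id (ENNReal.ofReal p) μ)
    (hπ : MemLp (fun z => z.2 - z.1) (ENNReal.ofReal p) π) {f : PathD N d → ℝ}
    (hf : ContDiff ℝ 1 f) (hD : ∀ n, MemLp (Dn f n) (ENNReal.ofReal q) μ) :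
    ∫ z, fderiv ℝ f z.1 (z.2 - z.1) ∂π ≤ optionalNorm q μ f * costD p π ^ (1 / p) := by
  have hint (n : ℕ) (j : Fin d) := integrable_Dn_mul_incr hpq h.1 hπ (hD n) j
  have hE (n : ℕ) : MemLp (μ[Dn f n | Fn N d n]) (ENNReal.ofReal q) μ :=
    (hD n).condExp (ENNReal.one_le_ofReal.2 hpq.symm.lt.le)
  calc ∫ z, fderiv ℝ f z.1 (z.2 - z.1) ∂π
      = ∑ n ∈ Finset.Icc 1 N, ∑ j, ∫ z, Dn f n z.1 j * incr n j (z.2 - z.1) ∂π := by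
        simp only [fderiv_eq_sum_Dn_mul_incr]
        rw [integral_finsetSum _ fun n _ => integrable_finsetSum _ fun j _ => hint n j]
        exact Finset.sum_congr rfl fun n _ => integral_finsetSum _ fun j _ => hint n j
    _ = ∑ i ∈ Finset.Icc 1 N ×ˢ Finset.univ,
          ∫ z, incr i.1 i.2 (z.2 - z.1) * (μ[Dn f i.1 | Fn N d i.1]) z.1 i.2 ∂π := by
        rw [Finset.sum_product]
        exact Finset.sum_congr rfl fun n _ => Finset.sum_congr rfl fun j _ =>
          h.integral_Dn_mul_incr hpq hμ hπ hf (hD n) j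
    _ ≤ _ := sum_integral_mul_le_Lp_mul_Lq hpq _
          (fun i => hπ.continuousLinearMap_comp (incr i.1 i.2))
          (fun i => memLp_comp_fst (memLp_apply (hE i.1) i.2) h.1)
    _ = optionalNorm q μ f * costD p π ^ (1 / p) := by
        rw [Finset.sum_product, Finset.sum_product, optionalNorm_eq_sum_integral_condExp hpq hD h.1,
          costD_eq_sum_integral_incr hpq.pos hπ, mul_comm]

theorem IsCausalStar.integral_sub_le (h : IsCausalStar μ π) (hpq : p.HolderConjugate q)
    (hμ : MemLp id (ENNReal.ofReal p) μ)
    (hπ : MemLp (fun z => z.2 - z.1) (ENNReal.ofReal p) π) {f : PathD N d → ℝ}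
    (hf : ContDiff ℝ 1 f) (hD : ∀ n, MemLp (Dn f n) (ENNReal.ofReal q) μ)
    (hR : Integrable (taylorRemainder f) π) :
    ∫ z, (f z.2 - f z.1) ∂π ≤
      optionalNorm q μ f * costD p π ^ (1 / p) + ∫ z, ‖taylorRemainder f z‖ ∂π :=
  calc ∫ z, (f z.2 - f z.1) ∂π
      = ∫ z, fderiv ℝ f z.1 (z.2 - z.1) ∂π + ∫ z, taylorRemainder f z ∂π := by
        rw [← integral_add (integrable_fderiv_sub hpq h.1 hπ hD) hR]
        simp only [taylorRemainder, add_sub_cancel]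
    _ ≤ _ := add_le_add (h.integral_fderiv_sub_le hpq hμ hπ hf hD)
        ((le_abs_self _).trans abs_integral_le_integral_abs)

end FirstOrder

section Limit

open Asymptotics Topology

theorem mul_one_add_rpow_le {a s b C : ℝ} (ha : 0 ≤ a) (hs : 0 ≤ s) (hb : 0 ≤ b)
    (h : b ≤ C * (1 + a ^ s)) : b ≤ 2 * C * (1 + a) ^ s := by
  have hC : 0 ≤ C := nonneg_of_mul_nonneg_left (hb.trans h) (by positivity)
  have h₁ : 1 ≤ (1 + a) ^ s := Real.one_le_rpow (by linarith) hs
  have h₂ : a ^ s ≤ (1 + a) ^ s := by gcongr; linarith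
  calc b ≤ C * (1 + a ^ s) := h
    _ ≤ C * ((1 + a) ^ s + (1 + a) ^ s) := by gcongr
    _ = 2 * C * (1 + a) ^ s := by ring

variable {N d : ℕ} {p q : ℝ} {μ : Measure (PathD N d)} {f : PathD N d → ℝ} {ι : Type*}
  {l : Filter ι} {π : ι → Measure (PathD N d × PathD N d)}

theorem tendsto_costD_rpow (hp : 0 < p) (h₀ : Tendsto (fun i => costD p (π i)) l (𝓝 0)) :
    Tendsto (fun i => costD p (π i) ^ (1 / p)) l (𝓝 0) := by
  have hp' : 0 < 1 / p := one_div_pos.2 hp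
  simpa only [Real.zero_rpow hp'.ne'] using h₀.rpow_const (.inr hp'.le)

theorem isBigO_lpDisplacement_costD_rpow (hp : 0 < p)
    (hcost : ∀ i, Integrable (fun z => cN p z.1 z.2) (π i)) :
    (fun i => lpDisplacement p (π i)) =O[l] fun i => costD p (π i) ^ (1 / p) :=
  IsBigO.of_bound N <| Eventually.of_forall fun i => by
    rw [Real.norm_of_nonneg (lpDisplacement_nonneg p (π i)),
      Real.norm_of_nonneg (Real.rpow_nonneg (costD_nonneg p (π i)) _)]
    exact lpDisplacement_le_mul_costD_rpow hp (hcost i)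

theorem tendsto_integral_norm_taylorRemainder_div [IsFiniteMeasure μ] {K : ℝ}
    (hpq : p.HolderConjugate q) (hμ : MemLp id (ENNReal.ofReal p) μ) (hf : ContDiff ℝ 1 f)
    (hK : ∀ x, ‖fderiv ℝ f x‖ ≤ K * (1 + ‖x‖) ^ (p - 1))
    (hfst : ∀ i, (π i).map Prod.fst = μ)
    (hcost : ∀ i, Integrable (fun z => cN p z.1 z.2) (π i))
    (h₀ : Tendsto (fun i => costD p (π i)) l (𝓝 0)) :
    Tendsto (fun i => (∫ z, ‖taylorRemainder f z‖ ∂π i) / costD p (π i) ^ (1 / p)) l (𝓝 0) := by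
  have hO := isBigO_lpDisplacement_costD_rpow (l := l) hpq.pos hcost
  have hD : Tendsto (fun i => lpDisplacement p (π i)) l (𝓝 0) :=
    hO.trans_tendsto (tendsto_costD_rpow hpq.pos h₀)
  have hR := isLittleO_integral_norm_taylorRemainder hpq hμ hf hK hfst
    (fun i => memLp_sub_of_integrable_cN hpq.pos (hcost i)) hD
  exact (hR.trans_isBigO hO).tendsto_div_nhds_zero

theorem limsup_coe_le_of_forall_le_add_of_tendsto_zero {u v : ι → ℝ} {a : ℝ}
    (h : ∀ i, u i ≤ a + v i) (hv : Tendsto v l (𝓝 0)) :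
    limsup (fun i => (u i : EReal)) l ≤ a := by
  refine EReal.le_of_forall_lt_iff_le.1 fun b hb => limsup_le_of_le (by isBoundedDefault) ?_
  filter_upwards [hv.eventually_lt_const (sub_pos.2 (EReal.coe_lt_coe_iff.1 hb))] with i hi
  exact EReal.coe_le_coe_iff.2 (by linarith [h i])

end Limit

theorem statement_9_general {N d : ℕ} {p q : ℝ} (hpq : p.HolderConjugate q)
    {μ : Measure (PathD N d)} [IsFiniteMeasure μ]
    (hmom : Integrable (fun x : PathD N d => ‖x‖ ^ p) μ)
    {f : PathD N d → ℝ} (hf : ContDiff ℝ 1 f) {C : ℝ}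
    (hgrow : ∀ n x, lpnorm q (Dn f n x) ≤ C * (1 + ‖x‖ ^ (p - 1)))
    {ι : Type*} {l : Filter ι} {π : ι → Measure (PathD N d × PathD N d)}
    (hcausal : ∀ i, IsCausalStar μ (π i))
    (hcost : ∀ i, Integrable (fun z => cN p z.1 z.2) (π i))
    (hpos : ∀ i, 0 < costD p (π i)) (h₀ : Tendsto (fun i => costD p (π i)) l (nhds 0)) :
    limsup (fun i => (((∫ z, (f z.2 - f z.1) ∂π i) / costD p (π i) ^ (1 / p) : ℝ) : EReal)) l ≤
      (optionalNorm q μ f : EReal) := by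
  have hμ : MemLp id (ENNReal.ofReal p) μ :=
    memLp_of_integrable_norm_rpow hpq.pos aestronglyMeasurable_id hmom
  have hDn (n : ℕ) (x : PathD N d) : lpnorm q (Dn f n x) ≤ 2 * C * (1 + ‖x‖) ^ (p - 1) :=
    mul_one_add_rpow_le (norm_nonneg x) hpq.sub_one_pos.le (lpnorm_nonneg _ _) (hgrow n x)
  have hD (n : ℕ) : MemLp (Dn f n) (ENNReal.ofReal q) μ :=
    memLp_Dn_of_lpnorm_le hpq.symm.pos hf (hDn n)
      (memLp_const_mul_one_add_norm_rpow hpq hμ (2 * C))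
  obtain ⟨K, hK⟩ : ∃ K, ∀ x, ‖fderiv ℝ f x‖ ≤ K * (1 + ‖x‖) ^ (p - 1) :=
    ⟨_, fun x =>
      (norm_fderiv_le_of_lpnorm_Dn_le hpq.symm.pos (hDn · x)).trans_eq (mul_assoc _ _ _).symm⟩
  refine limsup_coe_le_of_forall_le_add_of_tendsto_zero (fun i => ?_)
    (tendsto_integral_norm_taylorRemainder_div hpq hμ hf hK (hcausal · |>.1) hcost h₀)
  have hfin : IsFiniteMeasure ((π i).map Prod.fst) := (hcausal i).1 ▸ inferInstance
  have := Measure.isFiniteMeasure_of_map measurable_fst.aemeasurable (μ := π i)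
  have hπ := memLp_sub_of_integrable_cN hpq.pos (hcost i)
  have hc : 0 < costD p (π i) ^ (1 / p) := Real.rpow_pos_of_pos (hpos i) _
  rw [div_le_iff₀ hc, add_mul, div_mul_cancel₀ _ hc.ne']
  exact (hcausal i).integral_sub_le hpq hμ hπ hf hD
    (integrable_taylorRemainder hpq hμ hf hK (hcausal i).1 hπ)

/-- First-order upper bound along causal couplings with vanishing cost:
for any sequence `(π_k) ⊆ Π_c(μ,*)` with `E_{π_k}[c_N(X,Y)] > 0` and `E_{π_k}[c_N(X,Y)] → 0`,
`limsup_k E_{π_k}[f(Y) − f(X)] / E_{π_k}[c_N(X,Y)]^{1/p} ≤ ‖ᵒ𝔻f‖_{L^q(μ)}`. -/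
theorem statement_9 {N d : ℕ} (p q : ℝ) (hp : 1 < p) (hq : q = p / (p - 1))
    (μ : Measure (PathD N d)) [IsProbabilityMeasure μ]
    (hmom : Integrable (fun x : PathD N d => ‖x‖ ^ p) μ)
    (f : PathD N d → ℝ) (hf : ContDiff ℝ 1 f)
    (C : ℝ) (hgrow : ∀ n : ℕ, ∀ x : PathD N d,
      lpnorm q (Dn f n x) ≤ C * (1 + ‖x‖ ^ (p - 1)))
    (πs : ℕ → Measure (PathD N d × PathD N d))
    (hprob : ∀ k, IsProbabilityMeasure (πs k))
    (hcausal : ∀ k, IsCausalStar μ (πs k))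
    (hcost : ∀ k, Integrable (fun z => cN p z.1 z.2) (πs k))
    (hpos : ∀ k, 0 < costD p (πs k))
    (hto0 : Tendsto (fun k => costD p (πs k)) atTop (nhds 0)) :
    Filter.limsup (fun k =>
        (((∫ z, (f z.2 - f z.1) ∂(πs k)) / (costD p (πs k)) ^ (1 / p) : ℝ) : EReal))
      atTop ≤ ((optionalNorm q μ f : ℝ) : EReal) :=
  statement_9_general (hq ▸ Real.HolderConjugate.conjExponent hp) hmom hf hgrow hcausal hcost hpos
    hto0
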